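/- For every ε > 0 there exists C_ε > 0 such that, uniformly in dyadic N, N₁, N₂, N₃ ≥ 1 and m ∈ ℤ, the operator norm of the base tensor h^{𝐍,(m)} viewed as a linear map from ℓ²(ℤ²) (variable n₁) to ℓ²((ℤ²)³) (variables (n, n₂, n₃)), i.e. the map sending f to (n, n₂, n₃) ↦ ∑_{n₁} h^{𝐍,(m)}(n, n₁, n₂, n₃) f(n₁), is at most C_ε · min( N₃ (min(N, N₂))^ε, (N N₂)^{1/2 + ε}, (N N₃)^{1/2 + ε}, (N₂ N₃)^{1/2 + ε} ). -/

import Mathlib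

/-- Euclidean norm of a lattice point in `ℤ²`. -/
noncomputable def znorm (n : ℤ × ℤ) : ℝ := Real.sqrt ((n.1 : ℝ) ^ 2 + (n.2 : ℝ) ^ 2)

/-- Squared Euclidean norm `|n|²` of `n ∈ ℤ²`, as an integer. -/
def nsq (n : ℤ × ℤ) : ℤ := n.1 ^ 2 + n.2 ^ 2

/-- `φ(n̄) = |n|² − |n₁|² + |n₂|² − |n₃|²`. -/
def phiFn (n n₁ n₂ n₃ : ℤ × ℤ) : ℤ := nsq n - nsq n₁ + nsq n₂ - nsq n₃

/-- `N` is a dyadic number: `N = 2^k` for some integer `k ≥ 0`. -/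
def IsDyadic (N : ℝ) : Prop := ∃ k : ℕ, N = 2 ^ k

/-- `|n| ∼ N`: for dyadic `N ≥ 2` this means `N/2 < |n| ≤ N`; for `N = 1` it means `|n| ≤ 1`. -/
def simDyadic (N : ℝ) (n : ℤ × ℤ) : Prop :=
  (N = 1 ∧ znorm n ≤ 1) ∨ (N ≠ 1 ∧ N / 2 < znorm n ∧ znorm n ≤ N)

/-- Membership in the set `S^{𝐍,(m)}`. -/
def SMem (N N₁ N₂ N₃ : ℝ) (m : ℤ) (n n₁ n₂ n₃ : ℤ × ℤ) : Prop :=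
  n = n₁ - n₂ + n₃ ∧ n ≠ n₁ ∧ n ≠ n₃ ∧ phiFn n n₁ n₂ n₃ = m ∧
    simDyadic N n ∧ simDyadic N₁ n₁ ∧ simDyadic N₂ n₂ ∧ simDyadic N₃ n₃ 

-- The base tensor `h^{𝐍,(m)}`: the `{0,1}`-valued indicator of `S^{𝐍,(m)}`.
open Classical in
noncomputable def hten (N N₁ N₂ N₃ : ℝ) (m : ℤ) (n n₁ n₂ n₃ : ℤ × ℤ) : ℝ :=
  if SMem N N₁ N₂ N₃ m n n₁ n₂ n₃ then 1 else 0


theorem aux_divisor_bound (ε : ℝ) (hε : 0 < ε) :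
    ∃ C : ℝ, 1 ≤ C ∧ ∀ n : ℕ, n ≠ 0 → (n.divisors.card : ℝ) ≤ C * (n : ℝ) ^ ε := by
  obtain ⟨P, hP⟩ := exists_nat_ge ((2 : ℝ) ^ (1 / ε))
  set K : ℝ := 1 + 1 / (ε * Real.log 2) with hK
  have hl2 : 0 < Real.log 2 := Real.log_pos (by norm_num)
  have hK1 : 1 ≤ K := by
    have : 0 < 1 / (ε * Real.log 2) := by positivity
    linarith
  have hsmall : ∀ p : ℕ, 2 ≤ p → ∀ a : ℕ, ((a : ℝ) + 1) ≤ K * ((p : ℝ) ^ a) ^ ε := by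
    intro p hp a
    have hp' : (2 : ℝ) ≤ p := by exact_mod_cast hp
    have h1 : ((2 : ℝ) ^ a) ^ ε ≤ ((p : ℝ) ^ a) ^ ε := by gcongr
    have h2 : ((2 : ℝ) ^ a) ^ ε = Real.exp (a * (ε * Real.log 2)) := by
      rw [Real.rpow_def_of_pos (by positivity), Real.log_pow]; ring_nf
    have h3 : a * (ε * Real.log 2) + 1 ≤ Real.exp (a * (ε * Real.log 2)) := Real.add_one_le_exp _
    have h4 : (a : ℝ) + 1 ≤ K * (a * (ε * Real.log 2) + 1) := by
      have : K * (a * (ε * Real.log 2) + 1)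
        = a * (ε * Real.log 2) + 1 + a + 1 / (ε * Real.log 2) := by
        rw [hK]; field_simp; ring
      rw [this]
      have : 0 ≤ a * (ε * Real.log 2) := by positivity
      have : 0 < 1 / (ε * Real.log 2) := by positivity
      linarith
    calc (a : ℝ) + 1 ≤ K * (a * (ε * Real.log 2) + 1) := h4
      _ ≤ K * ((p : ℝ) ^ a) ^ ε := by
        apply mul_le_mul_of_nonneg_left _ (by linarith)
        linarith [h2 ▸ h1]
  have hbig : ∀ p : ℕ, P ≤ p → ∀ a : ℕ, ((a : ℝ) + 1) ≤ ((p : ℝ) ^ a) ^ ε := by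
    intro p hp a
    have hp' : (2 : ℝ) ^ (1 / ε) ≤ p := hP.trans (by exact_mod_cast hp)
    have h0 : (0 : ℝ) < (2 : ℝ) ^ (1 / ε) := by positivity
    have h1 : (2 : ℝ) ≤ (p : ℝ) ^ ε := by
      calc (2 : ℝ) = ((2 : ℝ) ^ (1 / ε)) ^ ε := by
            rw [← Real.rpow_mul (by norm_num)]; field_simp; simp
        _ ≤ _ := by gcongr
    have h2 : ((p : ℝ) ^ a) ^ ε = ((p : ℝ) ^ ε) ^ a := by
      rw [← Real.rpow_natCast, ← Real.rpow_natCast, ← Real.rpow_mul (by positivity),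
        ← Real.rpow_mul (by positivity), mul_comm]
    rw [h2]
    have h3 : (a : ℝ) + 1 ≤ (2 : ℝ) ^ a := by exact_mod_cast Nat.lt_two_pow_self
    exact h3.trans (by gcongr)
  refine ⟨K ^ P, one_le_pow₀ hK1, fun n hn => ?_⟩
  rw [Nat.card_divisors hn]
  have hn' : (n : ℝ) ^ ε = ∏ p ∈ n.primeFactors, ((p : ℝ) ^ (n.factorization p)) ^ ε := by
    rw [Real.finsetProd_rpow _ _ (fun i _ => by positivity)]
    congr 1
    conv_lhs => rw [← Nat.prod_factorization_pow_eq_self hn]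
    rw [Finsupp.prod]
    push_cast
    rfl
  have hb : ∏ p ∈ n.primeFactors, (if p < P then K else 1) ≤ K ^ P := by
    rw [Finset.prod_ite]
    simp only [Finset.prod_const, one_pow, mul_one]
    apply pow_le_pow_right₀ hK1
    calc _ ≤ (Finset.range P).card := Finset.card_le_card (by
            intro x; simp only [Finset.mem_filter, Finset.mem_range]; tauto)
      _ = P := by simp
  calc ((∏ x ∈ n.primeFactors, (n.factorization x + 1) : ℕ) : ℝ)
      = ∏ x ∈ n.primeFactors, ((n.factorization x : ℝ) + 1) := by push_cast; rfl
    _ ≤ ∏ x ∈ n.primeFactors, ((if x < P then K else 1) * ((x : ℝ) ^ (n.factorization x)) ^ ε) := by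
        apply Finset.prod_le_prod
        · intros; positivity
        · intro p hp
          have h2 := (Nat.prime_of_mem_primeFactors hp).two_le
          split_ifs with h
          · exact hsmall p h2 _
          · rw [one_mul]; exact hbig p (by omega) _
    _ = (∏ p ∈ n.primeFactors, (if p < P then K else 1)) * (n : ℝ) ^ ε := by
        rw [Finset.prod_mul_distrib, hn']
    _ ≤ _ := by gcongr

theorem aux_ten (D : ℤ) (hD : 0 < D) (S : Finset (ℤ × ℤ))
    (hS : ∀ z ∈ S, z.1 ^ 2 + z.2 ^ 2 = D)
    (hdet : ∀ z ∈ S, ∀ w ∈ S, D ∣ 2 * (z.1 * w.2 - z.2 * w.1)) : S.card ≤ 10 := by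
  rcases S.eq_empty_or_nonempty with rfl | ⟨z, hz⟩
  · simp
  let F : ℤ × ℤ → ℤ × Bool := fun w =>
    (2 * (z.1 * w.2 - z.2 * w.1) / D, decide (0 ≤ z.1 * w.1 + z.2 * w.2))
  have hcard : ((Finset.Icc (-2 : ℤ) 2) ×ˢ (Finset.univ : Finset Bool)).card = 10 := by decide
  rw [← hcard]
  have key : ∀ w ∈ S, (z.1 * w.2 - z.2 * w.1) ^ 2 + (z.1 * w.1 + z.2 * w.2) ^ 2 = D ^ 2 := by
    intro w hw
    have h1 := hS z hz
    have h2 := hS w hw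
    calc _ = (z.1 ^ 2 + z.2 ^ 2) * (w.1 ^ 2 + w.2 ^ 2) := by ring
      _ = _ := by rw [h1, h2]; ring
  apply Finset.card_le_card_of_injOn F
  · intro w hw
    obtain ⟨c, hc⟩ := hdet z hz w hw
    simp only [F, Finset.coe_product, Set.mem_prod, Finset.mem_coe, Finset.mem_Icc, Finset.mem_univ,
      and_true, hc]
    rw [Int.mul_ediv_cancel_left _ hD.ne']
    have h3 := key w hw
    have h4 : (D * c) ^ 2 ≤ (D * 2) ^ 2 := by
      rw [← hc]; nlinarith [sq_nonneg (z.1 * w.1 + z.2 * w.2)]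
    have h5 : c ^ 2 ≤ 2 ^ 2 := by
      rw [mul_pow, mul_pow] at h4
      exact le_of_mul_le_mul_left h4 (by positivity)
    constructor <;> nlinarith
  · intro w hw w' hw' h
    simp only [F, Prod.mk.injEq, decide_eq_decide] at h
    obtain ⟨c, hc⟩ := hdet z hz w hw
    obtain ⟨c', hc'⟩ := hdet z hz w' hw'
    rw [hc, hc', Int.mul_ediv_cancel_left _ hD.ne', Int.mul_ediv_cancel_left _ hD.ne'] at h
    obtain ⟨h1, h2⟩ := h
    subst h1
    have e1 : z.1 * w.2 - z.2 * w.1 = z.1 * w'.2 - z.2 * w'.1 := by linarith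
    have k1 := key w hw
    have k2 := key w' hw'
    rw [← e1] at k2
    have e2 : (z.1 * w.1 + z.2 * w.2) ^ 2 = (z.1 * w'.1 + z.2 * w'.2) ^ 2 := by linarith
    have e3 : z.1 * w.1 + z.2 * w.2 = z.1 * w'.1 + z.2 * w'.2 := by
      rcases sq_eq_sq_iff_eq_or_eq_neg.1 e2 with h | h
      · exact h
      · by_cases hh : 0 ≤ z.1 * w.1 + z.2 * w.2
        · have := h2.1 hh; linarith
        · have := mt h2.2 hh; linarith
    have hz' := hS z hz
    have a1 : D * w.1 = D * w'.1 := by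
      rw [← hz']; linear_combination z.1 * e3 - z.2 * e1
    have a2 : D * w.2 = D * w'.2 := by
      rw [← hz']; linear_combination z.2 * e3 + z.1 * e1
    exact Prod.ext (mul_left_cancel₀ hD.ne' a1) (mul_left_cancel₀ hD.ne' a2)

theorem aux_half (D x y u v : ℤ) (h1 : x ^ 2 + y ^ 2 = D) (h2 : u ^ 2 + v ^ 2 = D) (hD : 0 < D) :
    ∃ e : ℤ, D = (Int.gcd (x * v - y * u) D : ℤ) * e ∧ e ∣ x * v + y * u := by
  have hd0 : 0 < Int.gcd (x * v - y * u) D := Int.gcd_pos_of_ne_zero_right _ hD.ne'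
  obtain ⟨e, he⟩ := Int.gcd_dvd_right (a := x * v - y * u) (b := D)
  obtain ⟨q, hq⟩ := Int.gcd_dvd_left (a := x * v - y * u) (b := D)
  set d := Int.gcd (x * v - y * u) D with hd
  have hd0' : (d : ℤ) ≠ 0 := by exact_mod_cast hd0.ne'
  refine ⟨e, he, ?_⟩
  have hc : IsCoprime e q := by
    have hb := Int.gcd_eq_gcd_ab (x * v - y * u) D
    rw [← hd] at hb
    refine ⟨Int.gcdB (x * v - y * u) D, Int.gcdA (x * v - y * u) D, ?_⟩
    apply mul_left_cancel₀ hd0'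
    have e1 : (d : ℤ) * (Int.gcdB (x * v - y * u) D * e + Int.gcdA (x * v - y * u) D * q)
      = (d * q) * Int.gcdA (x * v - y * u) D + (d * e) * Int.gcdB (x * v - y * u) D := by ring
    rw [e1, ← he, ← hq, mul_one]
    exact hb.symm
  have hprod : (x * v - y * u) * (x * v + y * u) = D * (v ^ 2 - y ^ 2) := by
    linear_combination v ^ 2 * h1 - y ^ 2 * h2
  have : e ∣ q * (x * v + y * u) := by
    refine ⟨v ^ 2 - y ^ 2, ?_⟩
    apply mul_left_cancel₀ hd0'
    calc (d : ℤ) * (q * (x * v + y * u)) = (d * q) * (x * v + y * u) := by ring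
      _ = D * (v ^ 2 - y ^ 2) := by rw [← hq, hprod]
      _ = _ := by conv_lhs => rw [he]
                  ring
  exact hc.dvd_of_dvd_mul_left this

theorem aux_dvd_of_coprime (d x y t : ℤ) (h : IsCoprime x y) (h1 : d ∣ x * t) (h2 : d ∣ y * t) :
    d ∣ t := by
  obtain ⟨a, b, hab⟩ := h
  have : t = a * (x * t) + b * (y * t) := by linear_combination -t * hab
  rw [this]
  exact dvd_add (Dvd.dvd.mul_left h1 _) (Dvd.dvd.mul_left h2 _)

theorem aux_prim (D : ℕ) (hD : 0 < D) (S : Finset (ℤ × ℤ))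
    (hS : ∀ z ∈ S, z.1 ^ 2 + z.2 ^ 2 = (D : ℤ)) (hc : ∀ z ∈ S, IsCoprime z.1 z.2) :
    S.card ≤ 10 * D.divisors.card := by
  rcases S.eq_empty_or_nonempty with rfl | ⟨z, hz⟩
  · simp
  have hD' : (0 : ℤ) < D := by exact_mod_cast hD
  apply Finset.card_le_mul_card_image_of_maps_to
    (f := fun w : ℤ × ℤ => Int.gcd (z.1 * w.2 - z.2 * w.1) D)
  · intro w hw
    rw [Nat.mem_divisors]
    refine ⟨?_, hD.ne'⟩
    have := Int.gcd_dvd_right (a := z.1 * w.2 - z.2 * w.1) (b := (D : ℤ))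
    exact_mod_cast this
  · intro d hd
    apply aux_ten D hD'
    · intro w hw
      exact hS w (Finset.mem_filter.1 hw).1
    · intro w hw w' hw'
      obtain ⟨hw, hwd⟩ := Finset.mem_filter.1 hw
      obtain ⟨hw', hwd'⟩ := Finset.mem_filter.1 hw'
      obtain ⟨e, he, hev⟩ := aux_half D z.1 z.2 w.1 w.2 (hS z hz) (hS w hw) hD'
      obtain ⟨e', he', hev'⟩ := aux_half D z.1 z.2 w'.1 w'.2 (hS z hz) (hS w' hw') hD'
      have g1 := Int.gcd_dvd_left (a := z.1 * w.2 - z.2 * w.1) (b := (D : ℤ))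
      have g2 := Int.gcd_dvd_left (a := z.1 * w'.2 - z.2 * w'.1) (b := (D : ℤ))
      rw [hwd] at he g1
      rw [hwd'] at he' g2
      have hd0 : (d : ℤ) ≠ 0 := by
        intro h0; rw [h0] at he; simp at he; omega
      have hee : e' = e := mul_left_cancel₀ hd0 (he'.symm.trans he)
      subst hee
      have t1 : (d : ℤ) ∣ w.1 * w'.2 - w.2 * w'.1 := by
        apply aux_dvd_of_coprime _ _ _ _ (hc z hz)
        · have : z.1 * (w.1 * w'.2 - w.2 * w'.1) =
            w.1 * (z.1 * w'.2 - z.2 * w'.1) - w'.1 * (z.1 * w.2 - z.2 * w.1) := by ring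
          rw [this]
          exact dvd_sub (Dvd.dvd.mul_left g2 _) (Dvd.dvd.mul_left g1 _)
        · have : z.2 * (w.1 * w'.2 - w.2 * w'.1) =
            w.2 * (z.1 * w'.2 - z.2 * w'.1) - w'.2 * (z.1 * w.2 - z.2 * w.1) := by ring
          rw [this]
          exact dvd_sub (Dvd.dvd.mul_left g2 _) (Dvd.dvd.mul_left g1 _)
      have t2 : e' ∣ w.1 * w'.2 - w.2 * w'.1 := by
        apply aux_dvd_of_coprime _ _ _ _ (hc z hz)
        · have : z.1 * (w.1 * w'.2 - w.2 * w'.1) =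
            w.1 * (z.1 * w'.2 + z.2 * w'.1) - w'.1 * (z.1 * w.2 + z.2 * w.1) := by ring
          rw [this]
          exact dvd_sub (Dvd.dvd.mul_left hev' _) (Dvd.dvd.mul_left hev _)
        · have : z.2 * (w.1 * w'.2 - w.2 * w'.1) =
            w'.2 * (z.1 * w.2 + z.2 * w.1) - w.2 * (z.1 * w'.2 + z.2 * w'.1) := by ring
          rw [this]
          exact dvd_sub (Dvd.dvd.mul_left hev _) (Dvd.dvd.mul_left hev' _)
      have hg : ((Int.gcd d e' : ℕ) : ℤ) ∣ 2 := by
        set g : ℤ := ((Int.gcd d e' : ℕ) : ℤ) with hgdef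
        have gd : g ∣ d := Int.gcd_dvd_left _ _
        have ge : g ∣ e' := Int.gcd_dvd_right _ _
        have gD : g ∣ (D : ℤ) := he ▸ Dvd.dvd.mul_right gd _
        have q1 : g ∣ z.1 * w.2 - z.2 * w.1 := gd.trans g1
        have q2 : g ∣ z.1 * w.2 + z.2 * w.1 := ge.trans hev
        have q3 : g ∣ z.1 * (2 * w.2) := by
          have := dvd_add q1 q2
          have e : z.1 * w.2 - z.2 * w.1 + (z.1 * w.2 + z.2 * w.1) = z.1 * (2 * w.2) := by ring
          rwa [e] at this
        have q4 : g ∣ z.2 * (2 * w.1) := by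
          have := dvd_sub q2 q1
          have e : (z.1 * w.2 + z.2 * w.1) - (z.1 * w.2 - z.2 * w.1) = z.2 * (2 * w.1) := by ring
          rwa [e] at this
        have cop : ∀ a b : ℤ, IsCoprime a b → a ^ 2 + b ^ 2 = D → IsCoprime g a := by
          intro a b hab hn
          have h1 : IsCoprime (D : ℤ) a := by
            rw [← hn]
            have : a ^ 2 + b ^ 2 = b ^ 2 + a * a := by ring
            rw [this]
            exact (IsCoprime.add_mul_left_left (hab.symm.pow_left) a)
          exact h1.of_isCoprime_of_dvd_left gD
        have c1 := cop z.1 z.2 (hc z hz) (hS z hz)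
        have c2 := cop w.2 w.1 (hc w hw).symm (by rw [← hS w hw]; ring)
        have := c1.dvd_of_dvd_mul_left q3
        exact c2.dvd_of_dvd_mul_right this
      obtain ⟨k, hk⟩ := hg
      have hb := Int.gcd_eq_gcd_ab d e'
      obtain ⟨r, hr⟩ := t1
      obtain ⟨s, hs⟩ := t2
      have : 2 * (w.1 * w'.2 - w.2 * w'.1) = D * (k * (Int.gcdA d e' * s + Int.gcdB d e' * r)) := by
        rw [hk, hb, he]
        linear_combination (Int.gcdA d e' * k * d) * hs + (Int.gcdB d e' * k * e') * hr
      exact ⟨_, this⟩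

theorem aux_r2 (D : ℕ) (hD : 0 < D) (S : Finset (ℤ × ℤ))
    (hS : ∀ z ∈ S, z.1 ^ 2 + z.2 ^ 2 = (D : ℤ)) :
    S.card ≤ 10 * D.divisors.card * D.divisors.card := by
  have hD' : (0 : ℤ) < D := by exact_mod_cast hD
  have hg0 : ∀ z ∈ S, 0 < Int.gcd z.1 z.2 := by
    intro z hz
    rw [Nat.pos_iff_ne_zero]
    intro h
    rw [Int.gcd_eq_zero_iff] at h
    have := hS z hz
    rw [h.1, h.2] at this
    simp at this; omega
  have hgD : ∀ z ∈ S, (Int.gcd z.1 z.2) ^ 2 ∣ D := by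
    intro z hz
    have h1 : ((Int.gcd z.1 z.2 : ℕ) : ℤ) ∣ z.1 := Int.gcd_dvd_left _ _
    have h2 : ((Int.gcd z.1 z.2 : ℕ) : ℤ) ∣ z.2 := Int.gcd_dvd_right _ _
    have := dvd_add (pow_dvd_pow_of_dvd h1 2) (pow_dvd_pow_of_dvd h2 2)
    rw [hS z hz] at this
    exact_mod_cast this
  apply Finset.card_le_mul_card_image_of_maps_to (f := fun w : ℤ × ℤ => Int.gcd w.1 w.2)
  · intro w hw
    rw [Nat.mem_divisors]
    exact ⟨(Dvd.intro_left _ (by rw [pow_two])).trans (hgD w hw), hD.ne'⟩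
  · intro g hg
    rcases (S.filter (fun w : ℤ × ℤ => Int.gcd w.1 w.2 = g)).eq_empty_or_nonempty with h | ⟨w0, hw0⟩
    · rw [h]; simp
    obtain ⟨hw0, hw0g⟩ := Finset.mem_filter.1 hw0
    have hgp : 0 < g := hw0g ▸ hg0 w0 hw0
    obtain ⟨D1, hD1⟩ : g ^ 2 ∣ D := hw0g ▸ hgD w0 hw0
    have hD1p : 0 < D1 := by
      rcases Nat.eq_zero_or_pos D1 with h | h
      · rw [h] at hD1; omega
      · exact h
    have hgz : (g : ℤ) ≠ 0 := by exact_mod_cast hgp.ne'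
    have hfac : ∀ w ∈ S.filter (fun w : ℤ × ℤ => Int.gcd w.1 w.2 = g),
        w.1 = g * (w.1 / g) ∧ w.2 = g * (w.2 / g) := by
      intro w hw
      obtain ⟨hw, hwg⟩ := Finset.mem_filter.1 hw
      constructor
      · rw [Int.mul_ediv_cancel']; rw [← hwg]; exact Int.gcd_dvd_left _ _
      · rw [Int.mul_ediv_cancel']; rw [← hwg]; exact Int.gcd_dvd_right _ _
    have hinj : Set.InjOn (fun w : ℤ × ℤ => (w.1 / (g : ℤ), w.2 / (g : ℤ)))
        (S.filter (fun w : ℤ × ℤ => Int.gcd w.1 w.2 = g)) := by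
      intro w hw w' hw' h
      simp only [Prod.mk.injEq] at h
      have a := hfac w hw
      have b := hfac w' hw'
      rw [← h.1, ← h.2] at b
      exact Prod.ext (a.1.trans b.1.symm) (a.2.trans b.2.symm)
    rw [← Finset.card_image_of_injOn hinj]
    have := aux_prim D1 hD1p ((S.filter (fun w : ℤ × ℤ => Int.gcd w.1 w.2 = g)).image
      (fun w : ℤ × ℤ => (w.1 / (g : ℤ), w.2 / (g : ℤ)))) ?_ ?_
    · refine this.trans ?_
      have : D1.divisors ⊆ D.divisors := Nat.divisors_subset_of_dvd hD.ne' ⟨g ^ 2, by rw [hD1]; ring⟩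
      have := Finset.card_le_card this
      omega
    · intro z hz
      obtain ⟨w, hw, rfl⟩ := Finset.mem_image.1 hz
      have a := hfac w hw
      have b := hS w (Finset.mem_filter.1 hw).1
      simp only
      rw [a.1, a.2, hD1] at b
      push_cast at b
      apply mul_left_cancel₀ (pow_ne_zero 2 hgz)
      rw [← b]
      ring
    · intro z hz
      obtain ⟨w, hw, rfl⟩ := Finset.mem_image.1 hz
      have c := (Finset.mem_filter.1 hw).2
      rw [Int.isCoprime_iff_gcd_eq_one]
      simp only
      rw [← c]
      exact Int.gcd_ediv_gcd_ediv_gcd (c ▸ hgp)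

/-- The box of lattice points with both coordinates at most `N` in absolute value. -/
noncomputable def auxBox (N : ℕ) : Finset (ℤ × ℤ) := Finset.Icc (-(N : ℤ)) N ×ˢ Finset.Icc (-(N : ℤ)) N

theorem mem_auxBox (N : ℕ) (p : ℤ × ℤ) : p ∈ auxBox N ↔ |p.1| ≤ N ∧ |p.2| ≤ N := by
  simp only [auxBox, Finset.mem_product, Finset.mem_Icc, abs_le]

theorem card_auxBox (N : ℕ) : (auxBox N).card = (2 * N + 1) ^ 2 := by
  rw [auxBox, Finset.card_product, Int.card_Icc]
  have : ((N : ℤ) + 1 - -(N : ℤ)).toNat = 2 * N + 1 := by omega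
  rw [this]; ring

theorem card_auxBox_le (N : ℕ) (hN : 1 ≤ N) : ((auxBox N).card : ℝ) ≤ 9 * (N : ℝ) ^ 2 := by
  rw [card_auxBox]
  push_cast
  have : (1 : ℝ) ≤ N := by exact_mod_cast hN
  nlinarith

theorem aux_cramer (R w1 w2 u1 u2 v1 v2 : ℤ)
    (hu1 : |u1| ≤ 2 * R) (hu2 : |u2| ≤ 2 * R) (hv1 : |v1| ≤ 2 * R) (hv2 : |v2| ≤ 2 * R)
    (hu : w1 * u1 + w2 * u2 = -(u1 ^ 2 + u2 ^ 2)) (hv : w1 * v1 + w2 * v2 = -(v1 ^ 2 + v2 ^ 2))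
    (hu0 : ¬ (u1 = 0 ∧ u2 = 0)) (hv0 : ¬ (v1 = 0 ∧ v2 = 0)) (huv : ¬ (u1 = v1 ∧ u2 = v2)) :
    w1 ^ 2 + w2 ^ 2 ≤ 2048 * R ^ 6 := by
  have hR : 0 ≤ R := by have := abs_nonneg u1; omega
  have upos : 0 < u1 ^ 2 + u2 ^ 2 := by
    rcases not_and_or.1 hu0 with h | h <;> positivity
  have vpos : 0 < v1 ^ 2 + v2 ^ 2 := by
    rcases not_and_or.1 hv0 with h | h <;> positivity
  have hdet : u1 * v2 - u2 * v1 ≠ 0 := by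
    intro h
    have e1 : (u1 ^ 2 + u2 ^ 2) * v1 = (u1 * v1 + u2 * v2) * u1 := by linear_combination -u2 * h
    have e2 : (u1 ^ 2 + u2 ^ 2) * v2 = (u1 * v1 + u2 * v2) * u2 := by linear_combination u1 * h
    have e3 : (u1 ^ 2 + u2 ^ 2) * (v1 ^ 2 + v2 ^ 2) = (u1 ^ 2 + u2 ^ 2) * (u1 * v1 + u2 * v2) := by
      linear_combination -w1 * e1 - w2 * e2 + (u1 ^ 2 + u2 ^ 2) * hv - (u1 * v1 + u2 * v2) * hu
    have e4 := mul_left_cancel₀ upos.ne' e3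
    have e5 : (u1 * v1 + u2 * v2) * ((u1 * v1 + u2 * v2) - (u1 ^ 2 + u2 ^ 2)) = 0 := by
      linear_combination -v1 * e1 - v2 * e2 + (u1 ^ 2 + u2 ^ 2) * e4
    rcases mul_eq_zero.1 e5 with h5 | h5
    · omega
    · have h6 : (u1 - v1) ^ 2 + (u2 - v2) ^ 2 = 0 := by nlinarith
      apply huv
      constructor <;> nlinarith [sq_nonneg (u1 - v1), sq_nonneg (u2 - v2)]
  have hsq : ∀ t : ℤ, |t| ≤ 2 * R → t ^ 2 ≤ 4 * R ^ 2 := by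
    intro t ht
    have := sq_le_sq' (by linarith [neg_abs_le t]) ((le_abs_self t).trans ht)
    nlinarith
  have hb : ∀ s t a b c d : ℤ, |s| ≤ 2 * R → |t| ≤ 2 * R → |a| ≤ 2 * R → |b| ≤ 2 * R → |c| ≤ 2 * R →
      |d| ≤ 2 * R → |(a ^ 2 + b ^ 2) * s - (c ^ 2 + d ^ 2) * t| ≤ 32 * R ^ 3 := by
    intro s t a b c d hs ht ha hb hc hd
    have p1 : |(a ^ 2 + b ^ 2) * s| ≤ (8 * R ^ 2) * (2 * R) := by
      rw [abs_mul]
      apply mul_le_mul _ hs (abs_nonneg _) (by positivity)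
      rw [abs_of_nonneg (by positivity)]
      linarith [hsq a ha, hsq b hb]
    have p2 : |(c ^ 2 + d ^ 2) * t| ≤ (8 * R ^ 2) * (2 * R) := by
      rw [abs_mul]
      apply mul_le_mul _ ht (abs_nonneg _) (by positivity)
      rw [abs_of_nonneg (by positivity)]
      linarith [hsq c hc, hsq d hd]
    calc _ ≤ |(a ^ 2 + b ^ 2) * s| + |(c ^ 2 + d ^ 2) * t| := abs_sub _ _
      _ ≤ (8 * R ^ 2) * (2 * R) + (8 * R ^ 2) * (2 * R) := add_le_add p1 p2
      _ = _ := by ring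
  have hfin : ∀ w X : ℤ, (u1 * v2 - u2 * v1) * w = X → |X| ≤ 32 * R ^ 3 → w ^ 2 ≤ 1024 * R ^ 6 := by
    intro w X h1 h2
    have h3 : |w| ≤ 32 * R ^ 3 := by
      rw [← h1, abs_mul] at h2
      have : 1 ≤ |u1 * v2 - u2 * v1| := Int.one_le_abs hdet
      nlinarith [abs_nonneg w]
    have h4 := sq_le_sq' (by linarith [neg_abs_le w]) ((le_abs_self w).trans h3)
    calc w ^ 2 ≤ _ := h4
      _ = _ := by ring
  have f1 := hfin w1 ((v1 ^ 2 + v2 ^ 2) * u2 - (u1 ^ 2 + u2 ^ 2) * v2)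
    (by linear_combination v2 * hu - u2 * hv) (hb _ _ _ _ _ _ hu2 hv2 hv1 hv2 hu1 hu2)
  have f2 := hfin w2 ((u1 ^ 2 + u2 ^ 2) * v1 - (v1 ^ 2 + v2 ^ 2) * u1)
    (by linear_combination u1 * hv - v1 * hu) (hb _ _ _ _ _ _ hv1 hu1 hu1 hu2 hv1 hv2)
  linarith

theorem aux_circle (ε : ℝ) (hε : 0 < ε) :
    ∃ C : ℝ, 1 ≤ C ∧ ∀ R : ℕ, 1 ≤ R → ∀ (c : ℤ × ℤ) (k : ℤ) (S : Finset (ℤ × ℤ)),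
      (∀ p ∈ S, p ∈ auxBox R ∧ p.1 ^ 2 + p.2 ^ 2 - p.1 * c.1 - p.2 * c.2 = k) →
      (S.card : ℝ) ≤ C * (R : ℝ) ^ ε := by
  obtain ⟨C, hC1, hC⟩ := aux_divisor_bound (ε / 12) (by positivity)
  refine ⟨2 + 10 * C ^ 2 * (2048 : ℝ) ^ (ε / 6), ?_, ?_⟩
  · have : 0 ≤ 10 * C ^ 2 * (2048 : ℝ) ^ (ε / 6) := by positivity
    linarith
  intro R hR c k S hS
  have hR' : (1 : ℝ) ≤ R := by exact_mod_cast hR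
  have hRe : 1 ≤ (R : ℝ) ^ ε := Real.one_le_rpow hR' hε.le
  have hX : 0 ≤ 10 * C ^ 2 * (2048 : ℝ) ^ (ε / 6) := by positivity
  rcases le_or_gt S.card 2 with h2 | h2
  · have : (S.card : ℝ) ≤ 2 := by exact_mod_cast h2
    nlinarith
  obtain ⟨p, hp, q, hq, r, hr, hpq, hpr, hqr⟩ := Finset.two_lt_card.1 h2
  have hD : ∀ p ∈ S, (2 * p.1 - c.1) ^ 2 + (2 * p.2 - c.2) ^ 2 = 4 * k + c.1 ^ 2 + c.2 ^ 2 := by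
    intro p hp
    linear_combination 4 * (hS p hp).2
  have habs : ∀ p ∈ S, ∀ q ∈ S, |p.1 - q.1| ≤ 2 * R ∧ |p.2 - q.2| ≤ 2 * R := by
    intro p hp q hq
    have h1 := (mem_auxBox _ _).1 (hS p hp).1
    have h2 := (mem_auxBox _ _).1 (hS q hq).1
    simp only [abs_le] at *
    omega
  have hDle : (2 * p.1 - c.1) ^ 2 + (2 * p.2 - c.2) ^ 2 ≤ 2048 * (R : ℤ) ^ 6 := by
    apply aux_cramer R _ _ (q.1 - p.1) (q.2 - p.2) (r.1 - p.1) (r.2 - p.2)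
      (habs q hq p hp).1 (habs q hq p hp).2 (habs r hr p hp).1 (habs r hr p hp).2
    · linear_combination (hS q hq).2 - (hS p hp).2
    · linear_combination (hS r hr).2 - (hS p hp).2
    · rintro ⟨h1, h2⟩
      exact hpq (Prod.ext (by linarith) (by linarith))
    · rintro ⟨h1, h2⟩
      exact hpr (Prod.ext (by linarith) (by linarith))
    · rintro ⟨h1, h2⟩
      exact hqr (Prod.ext (by linarith) (by linarith))
  have hDp := hD p hp
  set D : ℤ := 4 * k + c.1 ^ 2 + c.2 ^ 2 with hDdef
  have hDnn : 0 ≤ D := by rw [← hDp]; positivity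
  lift D to ℕ using hDnn with D0 hD0
  have hDpos : 0 < D0 := by
    rw [Nat.pos_iff_ne_zero]
    intro h0
    have ha := hD p hp
    have hb := hD q hq
    rw [h0] at ha hb
    simp only [Nat.cast_zero] at ha hb
    apply hpq
    have z : ∀ x y : ℤ, x ^ 2 + y ^ 2 = 0 → x = 0 ∧ y = 0 := by
      intro x y h
      constructor <;> nlinarith [sq_nonneg x, sq_nonneg y]
    have a1 := z _ _ ha
    have b1 := z _ _ hb
    exact Prod.ext (by omega) (by omega)
  have hinj : Set.InjOn (fun w : ℤ × ℤ => (2 * w.1 - c.1, 2 * w.2 - c.2)) S := by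
    intro w _ w' _ h
    simp only [Prod.mk.injEq] at h
    exact Prod.ext (by omega) (by omega)
  have hcard := aux_r2 D0 hDpos (S.image (fun w : ℤ × ℤ => (2 * w.1 - c.1, 2 * w.2 - c.2))) (by
    intro z hz
    obtain ⟨w, hw, rfl⟩ := Finset.mem_image.1 hz
    exact hD w hw)
  rw [Finset.card_image_of_injOn hinj] at hcard
  have hcard' : (S.card : ℝ) ≤ 10 * (D0.divisors.card : ℝ) * D0.divisors.card := by
    exact_mod_cast hcard
  have hdiv := hC D0 hDpos.ne'
  have hD0le : (D0 : ℝ) ≤ 2048 * (R : ℝ) ^ 6 := by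
    have : (D0 : ℤ) ≤ 2048 * (R : ℤ) ^ 6 := by rw [← hDp]; exact hDle
    exact_mod_cast this
  have hpow : ((D0 : ℝ) ^ (ε / 12)) * ((D0 : ℝ) ^ (ε / 12)) ≤ (2048 : ℝ) ^ (ε / 6) * (R : ℝ) ^ ε := by
    have hD0' : (0 : ℝ) < D0 := by exact_mod_cast hDpos
    rw [← Real.rpow_add hD0']
    have e1 : ε / 12 + ε / 12 = ε / 6 := by ring
    rw [e1]
    calc (D0 : ℝ) ^ (ε / 6) ≤ (2048 * (R : ℝ) ^ 6) ^ (ε / 6) := by gcongr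
      _ = _ := by
        rw [Real.mul_rpow (by norm_num) (by positivity), ← Real.rpow_natCast (R : ℝ) 6,
          ← Real.rpow_mul (by positivity)]
        congr 2
        push_cast; ring
  calc (S.card : ℝ) ≤ 10 * (D0.divisors.card : ℝ) * D0.divisors.card := hcard'
    _ ≤ 10 * (C * (D0 : ℝ) ^ (ε / 12)) * (C * (D0 : ℝ) ^ (ε / 12)) := by gcongr
    _ = 10 * C ^ 2 * (((D0 : ℝ) ^ (ε / 12)) * ((D0 : ℝ) ^ (ε / 12))) := by ring
    _ ≤ 10 * C ^ 2 * ((2048 : ℝ) ^ (ε / 6) * (R : ℝ) ^ ε) := by gcongr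
    _ ≤ _ := by nlinarith

theorem aux_interval (R l : ℕ) (hl : 1 ≤ l) (S : Finset ℤ) (hS : ∀ x ∈ S, |x| ≤ R)
    (hd : ∀ x ∈ S, ∀ y ∈ S, (l : ℤ) ∣ x - y) : (S.card : ℝ) ≤ 2 * R / l + 2 := by
  have hl' : (0 : ℤ) < l := by exact_mod_cast hl
  have hlr : (0 : ℝ) < l := by exact_mod_cast hl
  have hinj : Set.InjOn (fun x : ℤ => x / (l : ℤ)) S := by
    intro x hx y hy h
    simp only at h
    obtain ⟨t, ht⟩ := hd x hx y hy
    have hx' : x = y + l * t := by linarith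
    rw [hx', Int.add_mul_ediv_left _ _ hl'.ne'] at h
    have : t = 0 := by linarith
    rw [hx', this]; ring
  have hmaps : Set.MapsTo (fun x : ℤ => x / (l : ℤ)) S
      (Finset.Icc ((-(R : ℤ)) / l) ((R : ℤ) / l) : Finset ℤ) := by
    intro x hx
    have := abs_le.1 (hS x hx)
    simp only [Finset.coe_Icc, Set.mem_Icc]
    exact ⟨Int.ediv_le_ediv hl' this.1, Int.ediv_le_ediv hl' this.2⟩
  have hc := Finset.card_le_card_of_injOn _ hmaps hinj
  rw [Int.card_Icc] at hc
  have h1 : (((R : ℤ) / l : ℤ) : ℝ) ≤ (R : ℝ) / l := by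
    rw [le_div_iff₀ hlr]
    have := Int.ediv_mul_le (R : ℤ) hl'.ne'
    exact_mod_cast this
  have h2 : -((R : ℝ) / l) - 1 ≤ (((-(R : ℤ)) / l : ℤ) : ℝ) := by
    have := Int.lt_ediv_add_one_mul_self (-(R : ℤ)) hl'
    have h3 : (-(R : ℝ)) < ((((-(R : ℤ)) / l : ℤ) : ℝ) + 1) * l := by exact_mod_cast this
    have h4 : -((R : ℝ) / l) < (((-(R : ℤ)) / l : ℤ) : ℝ) + 1 := by
      rw [← neg_div, div_lt_iff₀ hlr]; exact h3
    linarith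
  have h5 : ((-(R : ℤ)) / l) ≤ (R : ℤ) / l := Int.ediv_le_ediv hl' (by omega)
  have h6 : (S.card : ℤ) ≤ (R : ℤ) / l + 1 - (-(R : ℤ)) / l := by omega
  have h7 : (S.card : ℝ) ≤ (((R : ℤ) / l : ℤ) : ℝ) + 1 - (((-(R : ℤ)) / l : ℤ) : ℝ) := by
    exact_mod_cast h6
  have : 2 * (R : ℝ) / l = R / l + R / l := by ring
  linarith

/-- Sup norm of a lattice point. -/
def auxEll (b : ℤ × ℤ) : ℕ := max b.1.natAbs b.2.natAbs

/-- Primitive lattice vector in the direction of `a`. -/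
def auxPrim (a : ℤ × ℤ) : ℤ × ℤ := (a.1 / (Int.gcd a.1 a.2 : ℤ), a.2 / (Int.gcd a.1 a.2 : ℤ))

theorem auxEll_pos (b : ℤ × ℤ) (hb : b ≠ 0) : 1 ≤ auxEll b := by
  unfold auxEll
  by_contra h
  apply hb
  have : b.1.natAbs = 0 ∧ b.2.natAbs = 0 := by omega
  exact Prod.ext (by simpa using this.1) (by simpa using this.2)

theorem aux_gcd_pos (a : ℤ × ℤ) (ha : a ≠ 0) : 0 < Int.gcd a.1 a.2 := by
  rw [Nat.pos_iff_ne_zero]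
  intro h
  rw [Int.gcd_eq_zero_iff] at h
  exact ha (Prod.ext h.1 h.2)

theorem auxPrim_mul (a : ℤ × ℤ) : a.1 = (Int.gcd a.1 a.2 : ℤ) * (auxPrim a).1 ∧
    a.2 = (Int.gcd a.1 a.2 : ℤ) * (auxPrim a).2 := by
  constructor
  · exact (Int.mul_ediv_cancel' (Int.gcd_dvd_left _ _)).symm
  · exact (Int.mul_ediv_cancel' (Int.gcd_dvd_right _ _)).symm

theorem auxPrim_ne (a : ℤ × ℤ) (ha : a ≠ 0) : auxPrim a ≠ 0 := by
  intro h
  have := auxPrim_mul a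
  rw [h] at this
  simp only [Prod.fst_zero, Prod.snd_zero, mul_zero] at this
  exact ha (Prod.ext this.1 this.2)

theorem auxPrim_coprime (a : ℤ × ℤ) (ha : a ≠ 0) : IsCoprime (auxPrim a).1 (auxPrim a).2 := by
  rw [Int.isCoprime_iff_gcd_eq_one]
  exact Int.gcd_ediv_gcd_ediv_gcd (aux_gcd_pos a ha)

theorem aux_box_line (R : ℕ) (b : ℤ × ℤ) (hb : b ≠ 0) (S : Finset (ℤ × ℤ))
    (hS : ∀ p ∈ S, p ∈ auxBox R)
    (hd : ∀ p ∈ S, ∀ q ∈ S, ∃ t : ℤ, p.1 - q.1 = t * b.1 ∧ p.2 - q.2 = t * b.2) :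
    (S.card : ℝ) ≤ 2 * R / (auxEll b : ℝ) + 2 := by
  have hpos := auxEll_pos b hb
  rcases le_total b.2.natAbs b.1.natAbs with h | h
  · have he : auxEll b = b.1.natAbs := max_eq_left h
    have hb1 : b.1 ≠ 0 := by
      intro h0; rw [he, h0] at hpos; simp at hpos
    have hinj : Set.InjOn (fun p : ℤ × ℤ => p.1) S := by
      intro p hp q hq hpq
      simp only at hpq
      obtain ⟨t, h1, h2⟩ := hd p hp q hq
      have ht : t = 0 := by
        have : t * b.1 = 0 := by rw [← h1, hpq]; ring
        exact (mul_eq_zero.1 this).resolve_right hb1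
      rw [ht] at h2
      exact Prod.ext hpq (by linarith)
    rw [← Finset.card_image_of_injOn hinj]
    apply aux_interval R _ hpos
    · intro x hx
      obtain ⟨p, hp, rfl⟩ := Finset.mem_image.1 hx
      exact ((mem_auxBox _ _).1 (hS p hp)).1
    · intro x hx y hy
      obtain ⟨p, hp, rfl⟩ := Finset.mem_image.1 hx
      obtain ⟨q, hq, rfl⟩ := Finset.mem_image.1 hy
      obtain ⟨t, h1, h2⟩ := hd p hp q hq
      rw [he, Int.natAbs_dvd]
      exact ⟨t, by rw [h1]; ring⟩
  · have he : auxEll b = b.2.natAbs := max_eq_right h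
    have hb1 : b.2 ≠ 0 := by
      intro h0; rw [he, h0] at hpos; simp at hpos
    have hinj : Set.InjOn (fun p : ℤ × ℤ => p.2) S := by
      intro p hp q hq hpq
      simp only at hpq
      obtain ⟨t, h1, h2⟩ := hd p hp q hq
      have ht : t = 0 := by
        have : t * b.2 = 0 := by rw [← h2, hpq]; ring
        exact (mul_eq_zero.1 this).resolve_right hb1
      rw [ht] at h1
      exact Prod.ext (by linarith) hpq
    rw [← Finset.card_image_of_injOn hinj]
    apply aux_interval R _ hpos
    · intro x hx
      obtain ⟨p, hp, rfl⟩ := Finset.mem_image.1 hx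
      exact ((mem_auxBox _ _).1 (hS p hp)).2
    · intro x hx y hy
      obtain ⟨p, hp, rfl⟩ := Finset.mem_image.1 hx
      obtain ⟨q, hq, rfl⟩ := Finset.mem_image.1 hy
      obtain ⟨t, h1, h2⟩ := hd p hp q hq
      rw [he, Int.natAbs_dvd]
      exact ⟨t, by rw [h2]; ring⟩

theorem aux_line_count (R : ℕ) (a : ℤ × ℤ) (ha : a ≠ 0) (k : ℤ) (S : Finset (ℤ × ℤ))
    (hS : ∀ p ∈ S, p ∈ auxBox R) (hk : ∀ p ∈ S, a.1 * p.1 + a.2 * p.2 = k) :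
    (S.card : ℝ) ≤ 2 * R / (auxEll (auxPrim a) : ℝ) + 2 := by
  have hell : auxEll (auxPrim a) = auxEll (-(auxPrim a).2, (auxPrim a).1) := by
    simp [auxEll, max_comm]
  rw [hell]
  have hne := auxPrim_ne a ha
  apply aux_box_line R _ _ S hS
  · intro p hp q hq
    have hg : (Int.gcd a.1 a.2 : ℤ) ≠ 0 := by exact_mod_cast (aux_gcd_pos a ha).ne'
    obtain ⟨e1, e2⟩ := auxPrim_mul a
    have hc := auxPrim_coprime a ha
    have h0 : (auxPrim a).1 * (p.1 - q.1) + (auxPrim a).2 * (p.2 - q.2) = 0 := by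
      apply mul_left_cancel₀ hg
      have := hk p hp
      have := hk q hq
      linear_combination hk p hp - hk q hq - (p.1 - q.1) * e1 - (p.2 - q.2) * e2
    obtain ⟨x, y, hxy⟩ := hc
    refine ⟨x * (p.2 - q.2) - y * (p.1 - q.1), ?_, ?_⟩
    · simp only
      linear_combination -(p.1 - q.1) * hxy + x * h0
    · simp only
      linear_combination -(p.2 - q.2) * hxy + y * h0
  · intro h
    apply hne
    have h1 := congrArg Prod.fst h
    have h2 := congrArg Prod.snd h
    simp at h1 h2
    exact Prod.ext h2 h1

theorem aux_H (N : ℕ) : ∑ x ∈ Finset.Icc (-(N : ℤ)) N, (1 : ℝ) / max (|x| : ℝ) 1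
    ≤ 1 + 2 * (harmonic N : ℝ) := by
  induction N with
  | zero => simp
  | succ N ih =>
    have h : Finset.Icc (-((N + 1 : ℕ) : ℤ)) ((N + 1 : ℕ) : ℤ) =
        insert ((N : ℤ) + 1) (insert (-((N : ℤ) + 1)) (Finset.Icc (-(N : ℤ)) N)) := by
      ext x
      simp only [Finset.mem_Icc, Finset.mem_insert]
      push_cast
      omega
    rw [h, Finset.sum_insert, Finset.sum_insert, harmonic_succ]
    · have e1 : max (|(((N : ℤ) + 1 : ℤ) : ℝ)|) 1 = (N : ℝ) + 1 := by
        push_cast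
        rw [abs_of_nonneg (by positivity)]
        exact max_eq_left (by linarith [(Nat.cast_nonneg N : (0 : ℝ) ≤ N)])
      have e2 : max (|((-((N : ℤ) + 1) : ℤ) : ℝ)|) 1 = (N : ℝ) + 1 := by
        rw [Int.cast_neg, abs_neg, e1]
      rw [e1, e2]
      push_cast
      have : (1 : ℝ) / ((N : ℝ) + 1) = ((N : ℝ) + 1)⁻¹ := one_div _
      linarith
    · simp
    · simp only [Finset.mem_Icc, Finset.mem_insert]
      omega

theorem aux_H_bound (δ : ℝ) (hδ : 0 < δ) (N : ℕ) (hN : 1 ≤ N) :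
    ∑ x ∈ Finset.Icc (-(N : ℤ)) N, (1 : ℝ) / max (|x| : ℝ) 1 ≤ (3 + 2 / δ) * (N : ℝ) ^ δ := by
  have h1 := aux_H N
  have h2 := harmonic_le_one_add_log N
  have h3 : Real.log N ≤ (N : ℝ) ^ δ / δ := Real.log_le_rpow_div (by positivity) hδ
  have h4 : 1 ≤ (N : ℝ) ^ δ := Real.one_le_rpow (by exact_mod_cast hN) hδ.le
  have h5 : (3 + 2 / δ) * (N : ℝ) ^ δ = 3 * (N : ℝ) ^ δ + 2 * ((N : ℝ) ^ δ / δ) := by ring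
  rw [h5]
  linarith

theorem aux_ell_sum (N : ℕ) (hN : 1 ≤ N) (c : ℤ × ℤ) :
    ∑ n ∈ (auxBox N).filter (fun n => n ≠ c), (1 : ℝ) / auxEll (auxPrim (n - c)) ≤
      9 * N + 4 * N * (∑ x ∈ Finset.Icc (-(N : ℤ)) N, (1 : ℝ) / max (|x| : ℝ) 1) ^ 2 := by
  have hN' : (1 : ℝ) ≤ N := by exact_mod_cast hN
  set A := (auxBox N).filter (fun n => n ≠ c) with hA
  have hAc : (A.card : ℝ) ≤ 9 * (N : ℝ) ^ 2 := by
    refine le_trans ?_ (card_auxBox_le N hN)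
    exact_mod_cast Finset.card_filter_le _ _
  have hne : ∀ n ∈ A, n - c ≠ 0 := by
    intro n hn
    exact sub_ne_zero.2 (Finset.mem_filter.1 hn).2
  rw [← Finset.sum_filter_not_add_sum_filter A (fun n => auxEll (auxPrim (n - c)) ≤ N)]
  apply add_le_add
  · calc _ ≤ ∑ n ∈ A.filter (fun n => ¬ auxEll (auxPrim (n - c)) ≤ N), (1 : ℝ) / N := by
          apply Finset.sum_le_sum
          intro n hn
          have := (Finset.mem_filter.1 hn).2
          have h : (N : ℝ) ≤ auxEll (auxPrim (n - c)) := by exact_mod_cast (by omega)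
          apply one_div_le_one_div_of_le (by linarith) h
      _ = ((A.filter (fun n => ¬ auxEll (auxPrim (n - c)) ≤ N)).card : ℝ) * (1 / N) := by
          rw [Finset.sum_const, nsmul_eq_mul]
      _ ≤ (9 * (N : ℝ) ^ 2) * (1 / N) := by
          gcongr
          refine le_trans ?_ hAc
          exact_mod_cast Finset.card_filter_le _ _
      _ = _ := by field_simp
  · set B := A.filter (fun n => auxEll (auxPrim (n - c)) ≤ N) with hB
    set T := (auxBox N).filter (fun q => q ≠ 0) with hT
    have hmaps : ∀ n ∈ B, auxPrim (n - c) ∈ T := by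
      intro n hn
      obtain ⟨hn1, hn2⟩ := Finset.mem_filter.1 hn
      rw [hT, Finset.mem_filter, mem_auxBox]
      refine ⟨?_, auxPrim_ne _ (hne n hn1)⟩
      have h1 : (auxPrim (n - c)).1.natAbs ≤ N := (le_max_left _ _).trans hn2
      have h2 : (auxPrim (n - c)).2.natAbs ≤ N := (le_max_right _ _).trans hn2
      rw [Int.abs_eq_natAbs, Int.abs_eq_natAbs]
      omega
    rw [← Finset.sum_fiberwise_of_maps_to hmaps]
    have hq : ∀ q ∈ T, ∑ n ∈ B with auxPrim (n - c) = q, (1 : ℝ) / auxEll (auxPrim (n - c)) ≤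
        4 * N * ((1 / max (|q.1| : ℝ) 1) * (1 / max (|q.2| : ℝ) 1)) := by
      intro q hq
      obtain ⟨hq1, hq2⟩ := Finset.mem_filter.1 hq
      have hell : (1 : ℝ) ≤ auxEll q := by exact_mod_cast auxEll_pos q hq2
      have hellN : (auxEll q : ℝ) ≤ N := by
        have := (mem_auxBox _ _).1 hq1
        rw [Int.abs_eq_natAbs, Int.abs_eq_natAbs] at this
        have h : auxEll q ≤ N := max_le (by omega) (by omega)
        exact_mod_cast h
      have hcard : ((B.filter (fun n => auxPrim (n - c) = q)).card : ℝ)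
          ≤ 2 * N / (auxEll q : ℝ) + 2 := by
        apply aux_box_line N q hq2
        · intro p hp
          simp only [hB, hA, Finset.mem_filter] at hp
          exact hp.1.1.1
        · intro p hp p' hp'
          have hp := (Finset.mem_filter.1 hp).2
          have hp' := (Finset.mem_filter.1 hp').2
          have a := auxPrim_mul (p - c)
          have b := auxPrim_mul (p' - c)
          rw [hp] at a
          rw [hp'] at b
          simp only [Prod.fst_sub, Prod.snd_sub] at a b
          exact ⟨((p.1 - c.1).gcd (p.2 - c.2) : ℤ) - ((p'.1 - c.1).gcd (p'.2 - c.2) : ℤ),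
            by linear_combination a.1 - b.1, by linear_combination a.2 - b.2⟩
      have hsum : ∑ n ∈ B with auxPrim (n - c) = q, (1 : ℝ) / auxEll (auxPrim (n - c)) =
          ((B.filter (fun n => auxPrim (n - c) = q)).card : ℝ) * (1 / auxEll q) := by
        rw [← nsmul_eq_mul, ← Finset.sum_const]
        apply Finset.sum_congr rfl
        intro n hn
        rw [(Finset.mem_filter.1 hn).2]
      rw [hsum]
      have hmax1 : max (|q.1| : ℝ) 1 ≤ auxEll q := by
        apply max_le _ hell
        have : |q.1| ≤ (auxEll q : ℤ) := by
          have : q.1.natAbs ≤ auxEll q := le_max_left _ _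
          rw [Int.abs_eq_natAbs]
          omega
        exact_mod_cast this
      have hmax2 : max (|q.2| : ℝ) 1 ≤ auxEll q := by
        apply max_le _ hell
        have : |q.2| ≤ (auxEll q : ℤ) := by
          have : q.2.natAbs ≤ auxEll q := le_max_right _ _
          rw [Int.abs_eq_natAbs]
          omega
        exact_mod_cast this
      calc _ ≤ (2 * N / (auxEll q : ℝ) + 2) * (1 / auxEll q) := by gcongr
        _ ≤ (4 * N / (auxEll q : ℝ)) * (1 / auxEll q) := by
            gcongr
            have : (2 : ℝ) ≤ 2 * N / auxEll q := by
              rw [le_div_iff₀ (by linarith)]; linarith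
            have e : 4 * (N : ℝ) / auxEll q = 2 * N / auxEll q + 2 * N / auxEll q := by ring
            linarith
        _ = 4 * N * ((1 / auxEll q) * (1 / auxEll q)) := by ring
        _ ≤ _ := by
            have p1 : 0 < max (|q.1| : ℝ) 1 := lt_of_lt_of_le one_pos (le_max_right _ _)
            have p2 : 0 < max (|q.2| : ℝ) 1 := lt_of_lt_of_le one_pos (le_max_right _ _)
            gcongr
    calc _ ≤ ∑ q ∈ T, 4 * N * ((1 / max (|q.1| : ℝ) 1) * (1 / max (|q.2| : ℝ) 1)) :=
          Finset.sum_le_sum hq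
      _ ≤ ∑ q ∈ auxBox N, 4 * N * ((1 / max (|q.1| : ℝ) 1) * (1 / max (|q.2| : ℝ) 1)) := by
          apply Finset.sum_le_sum_of_subset_of_nonneg (Finset.filter_subset _ _)
          intros; positivity
      _ = _ := by
          rw [← Finset.mul_sum, auxBox, Finset.sum_product, pow_two, Finset.sum_mul_sum]

theorem aux_pairs (ε : ℝ) (hε : 0 < ε) :
    ∃ C : ℝ, 1 ≤ C ∧ ∀ N R : ℕ, 1 ≤ N → N ≤ R → ∀ (c : ℤ × ℤ) (k : ℤ × ℤ → ℤ)
      (S : Finset ((ℤ × ℤ) × (ℤ × ℤ))),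
      (∀ t ∈ S, t.1 ∈ auxBox N ∧ t.2 ∈ auxBox R ∧ t.1 ≠ c ∧
        (t.1.1 - c.1) * t.2.1 + (t.1.2 - c.2) * t.2.2 = k t.1) →
      (S.card : ℝ) ≤ C * ((N : ℝ) * R) ^ (1 + ε) := by
  refine ⟨36 + 8 * (3 + 2 / (ε / 2)) ^ 2, ?_, ?_⟩
  · have : 0 ≤ 8 * (3 + 2 / (ε / 2)) ^ 2 := by positivity
    linarith
  intro N R hN hNR c k S hS
  have hN' : (1 : ℝ) ≤ N := by exact_mod_cast hN
  have hNR' : (N : ℝ) ≤ R := by exact_mod_cast hNR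
  set A := (auxBox N).filter (fun n => n ≠ c) with hA
  have hmaps : ∀ t ∈ S, t.1 ∈ A := by
    intro t ht
    rw [hA, Finset.mem_filter]
    exact ⟨(hS t ht).1, (hS t ht).2.2.1⟩
  have hAc : (A.card : ℝ) ≤ 9 * (N : ℝ) ^ 2 := by
    refine le_trans ?_ (card_auxBox_le N hN)
    exact_mod_cast Finset.card_filter_le _ _
  have h1 : (S.card : ℝ) ≤ ∑ n ∈ A, (2 * R * ((1 : ℝ) / auxEll (auxPrim (n - c))) + 2) := by
    rw [Finset.card_eq_sum_card_fiberwise hmaps]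
    push_cast
    apply Finset.sum_le_sum
    intro n hn
    have hinj : Set.InjOn (fun t : (ℤ × ℤ) × (ℤ × ℤ) => t.2) (S.filter (fun t => t.1 = n)) := by
      intro t ht t' ht' h
      have a := (Finset.mem_filter.1 ht).2
      have b := (Finset.mem_filter.1 ht').2
      exact Prod.ext (a.trans b.symm) h
    rw [← Finset.card_image_of_injOn hinj]
    have := aux_line_count R (n - c) (sub_ne_zero.2 (Finset.mem_filter.1 hn).2) (k n)
      ((S.filter (fun t => t.1 = n)).image (fun t : (ℤ × ℤ) × (ℤ × ℤ) => t.2)) ?_ ?_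
    · refine this.trans (le_of_eq ?_)
      ring
    · intro p hp
      obtain ⟨t, ht, rfl⟩ := Finset.mem_image.1 hp
      exact (hS t (Finset.mem_filter.1 ht).1).2.1
    · intro p hp
      obtain ⟨t, ht, rfl⟩ := Finset.mem_image.1 hp
      obtain ⟨ht1, rfl⟩ := Finset.mem_filter.1 ht
      exact (hS t ht1).2.2.2
  rw [Finset.sum_add_distrib, ← Finset.mul_sum, Finset.sum_const, nsmul_eq_mul] at h1
  have h2 := aux_ell_sum N hN c
  rw [← hA] at h2
  have h3 := aux_H_bound (ε / 2) (by positivity) N hN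
  set H := ∑ x ∈ Finset.Icc (-(N : ℤ)) N, (1 : ℝ) / max (|x| : ℝ) 1 with hH
  have hH0 : 0 ≤ H := Finset.sum_nonneg (fun _ _ => by positivity)
  set K := 3 + 2 / (ε / 2) with hK
  have h4 : H ^ 2 ≤ K ^ 2 * (N : ℝ) ^ ε := by
    calc H ^ 2 ≤ (K * (N : ℝ) ^ (ε / 2)) ^ 2 := by gcongr
      _ = K ^ 2 * ((N : ℝ) ^ (ε / 2)) ^ 2 := by ring
      _ = _ := by
        rw [← Real.rpow_natCast ((N : ℝ) ^ (ε / 2)) 2, ← Real.rpow_mul (by positivity)]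
        congr 2
        push_cast; ring
  have hR0 : (0 : ℝ) < R := by linarith
  have h5 : (N : ℝ) ^ ε ≤ ((N : ℝ) * R) ^ ε := by
    gcongr
    nlinarith
  have h6 : 1 ≤ ((N : ℝ) * R) ^ ε := Real.one_le_rpow (by nlinarith) hε.le
  have h7 : ((N : ℝ) * R) ^ (1 + ε) = (N * R) * ((N : ℝ) * R) ^ ε := by
    rw [Real.rpow_add (by positivity), Real.rpow_one]
  rw [h7]
  set X := ((N : ℝ) * R) ^ ε
  calc (S.card : ℝ) ≤ 2 * R * (9 * N + 4 * N * (K ^ 2 * X)) + (9 * (N : ℝ) ^ 2) * 2 := by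
        refine h1.trans ?_
        gcongr
        refine h2.trans ?_
        gcongr
        refine h4.trans ?_
        gcongr
    _ = 18 * (N * R) + 18 * (N * N) + 8 * K ^ 2 * ((N * R) * X) := by ring
    _ ≤ 18 * ((N * R) * X) + 18 * ((N * R) * X) + 8 * K ^ 2 * ((N * R) * X) := by
        have e1 : (N : ℝ) * R ≤ N * R * X := le_mul_of_one_le_right (by positivity) h6
        have e2 : (N : ℝ) * N ≤ N * R := by gcongr
        linarith
    _ = _ := by ring

/-- The triples `(n, n₂, n₃)` in boxes which are admissible for a fixed `n₁`. -/
def auxGood (N N₂ N₃ : ℕ) (n₁ : ℤ × ℤ) (m : ℤ) (t : (ℤ × ℤ) × (ℤ × ℤ) × (ℤ × ℤ)) : Prop :=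
  t.1 ∈ auxBox N ∧ t.2.1 ∈ auxBox N₂ ∧ t.2.2 ∈ auxBox N₃ ∧ t.1 = n₁ - t.2.1 + t.2.2 ∧
    t.1 ≠ n₁ ∧ t.1 ≠ t.2.2 ∧ phiFn t.1 n₁ t.2.1 t.2.2 = m

theorem auxGood_swap (N N₂ N₃ : ℕ) (n₁ : ℤ × ℤ) (m : ℤ) (t : (ℤ × ℤ) × (ℤ × ℤ) × (ℤ × ℤ))
    (h : auxGood N N₂ N₃ n₁ m t) : auxGood N₂ N N₃ n₁ m (t.2.1, t.1, t.2.2) := by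
  obtain ⟨h1, h2, h3, h4, h5, h6, h7⟩ := h
  refine ⟨h2, h1, h3, ?_, ?_, ?_, ?_⟩
  · simp only; rw [h4]; abel
  · simp only
    intro h; apply h6; rw [h4, h]; abel
  · simp only
    intro h; apply h5; rw [h4, h]; abel
  · rw [← h7]; simp only [phiFn]; ring

theorem aux_swap_card (N N₂ N₃ : ℕ) (n₁ : ℤ × ℤ) (m : ℤ)
    (S : Finset ((ℤ × ℤ) × (ℤ × ℤ) × (ℤ × ℤ))) (hS : ∀ t ∈ S, auxGood N N₂ N₃ n₁ m t) :
    ∃ S' : Finset ((ℤ × ℤ) × (ℤ × ℤ) × (ℤ × ℤ)), S'.card = S.card ∧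
      ∀ t ∈ S', auxGood N₂ N N₃ n₁ m t := by
  classical
  refine ⟨S.image (fun t => (t.2.1, t.1, t.2.2)), ?_, ?_⟩
  · apply Finset.card_image_of_injOn
    intro t _ t' _ h
    simp only [Prod.mk.injEq] at h
    exact Prod.ext h.2.1 (Prod.ext h.1 h.2.2)
  · intro t ht
    obtain ⟨s, hs, rfl⟩ := Finset.mem_image.1 ht
    exact auxGood_swap _ _ _ _ _ _ (hS s hs)

theorem aux_phi (N N₂ N₃ : ℕ) (n₁ : ℤ × ℤ) (m : ℤ) (t : (ℤ × ℤ) × (ℤ × ℤ) × (ℤ × ℤ))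
    (h : auxGood N N₂ N₃ n₁ m t) :
    (t.1.1 - n₁.1) * (t.1.1 - t.2.2.1) + (t.1.2 - n₁.2) * (t.1.2 - t.2.2.2) = m / 2 ∧
    t.2.1 = n₁ + t.2.2 - t.1 := by
  obtain ⟨h1, h2, h3, h4, h5, h6, h7⟩ := h
  have e : t.2.1 = n₁ + t.2.2 - t.1 := by rw [h4]; abel
  refine ⟨?_, e⟩
  have e1 : t.2.1.1 = n₁.1 + t.2.2.1 - t.1.1 := by rw [e]; rfl
  have e2 : t.2.1.2 = n₁.2 + t.2.2.2 - t.1.2 := by rw [e]; rfl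
  simp only [phiFn, nsq] at h7
  rw [e1, e2] at h7
  have : 2 * ((t.1.1 - n₁.1) * (t.1.1 - t.2.2.1) + (t.1.2 - n₁.2) * (t.1.2 - t.2.2.2)) = m := by
    linear_combination h7
  omega

theorem aux_L1 (ε : ℝ) (hε : 0 < ε) : ∃ C : ℝ, 1 ≤ C ∧ ∀ N N₂ N₃ : ℕ, 1 ≤ N → 1 ≤ N₃ →
    ∀ (n₁ : ℤ × ℤ) (m : ℤ) (S : Finset ((ℤ × ℤ) × (ℤ × ℤ) × (ℤ × ℤ))),
    (∀ t ∈ S, auxGood N N₂ N₃ n₁ m t) → (S.card : ℝ) ≤ C * ((N₃ : ℝ) ^ 2 * (N : ℝ) ^ ε) := by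
  obtain ⟨C, hC1, hC⟩ := aux_circle ε hε
  refine ⟨9 * C, by linarith, ?_⟩
  intro N N₂ N₃ hN hN3 n₁ m S hS
  have hmaps : ∀ t ∈ S, t.2.2 ∈ auxBox N₃ := fun t ht => (hS t ht).2.2.1
  have hb := card_auxBox_le N₃ hN3
  have hfib : ∀ q ∈ auxBox N₃, ((S.filter (fun t => t.2.2 = q)).card : ℝ) ≤ C * (N : ℝ) ^ ε := by
    intro q _
    have hinj : Set.InjOn (fun t : (ℤ × ℤ) × (ℤ × ℤ) × (ℤ × ℤ) => t.1)
        (S.filter (fun t => t.2.2 = q)) := by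
      intro t ht t' ht' h
      obtain ⟨a1, a2⟩ := Finset.mem_filter.1 ht
      obtain ⟨b1, b2⟩ := Finset.mem_filter.1 ht'
      simp only at h
      have c1 := (aux_phi _ _ _ _ _ _ (hS t a1)).2
      have c2 := (aux_phi _ _ _ _ _ _ (hS t' b1)).2
      refine Prod.ext h (Prod.ext ?_ (a2.trans b2.symm))
      rw [c1, c2, h, a2, b2]
    rw [← Finset.card_image_of_injOn hinj]
    apply hC N hN (n₁ + q) (m / 2 - n₁.1 * q.1 - n₁.2 * q.2)
    intro p hp
    obtain ⟨t, ht, rfl⟩ := Finset.mem_image.1 hp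
    obtain ⟨a1, rfl⟩ := Finset.mem_filter.1 ht
    refine ⟨(hS t a1).1, ?_⟩
    have := (aux_phi _ _ _ _ _ _ (hS t a1)).1
    simp only [Prod.fst_add, Prod.snd_add]
    linear_combination this
  rw [Finset.card_eq_sum_card_fiberwise hmaps]
  push_cast
  calc _ ≤ ∑ q ∈ auxBox N₃, C * (N : ℝ) ^ ε := Finset.sum_le_sum hfib
    _ = ((auxBox N₃).card : ℝ) * (C * (N : ℝ) ^ ε) := by rw [Finset.sum_const, nsmul_eq_mul]
    _ ≤ (9 * (N₃ : ℝ) ^ 2) * (C * (N : ℝ) ^ ε) := by gcongr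
    _ = _ := by ring

theorem aux_L2 (ε : ℝ) (hε : 0 < ε) : ∃ C : ℝ, 1 ≤ C ∧ ∀ N N₂ N₃ : ℕ, 1 ≤ N →
    ∀ (n₁ : ℤ × ℤ) (m : ℤ) (S : Finset ((ℤ × ℤ) × (ℤ × ℤ) × (ℤ × ℤ))),
    (∀ t ∈ S, auxGood N N₂ N₃ n₁ m t) →
    (N ≤ N₂ → (S.card : ℝ) ≤ C * ((N : ℝ) * N₂) ^ (1 + ε)) ∧
    (N ≤ N₃ → (S.card : ℝ) ≤ C * ((N : ℝ) * N₃) ^ (1 + ε)) := by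
  obtain ⟨C, hC1, hC⟩ := aux_pairs ε hε
  refine ⟨C, hC1, ?_⟩
  intro N N₂ N₃ hN n₁ m S hS
  constructor
  · intro hle
    have hinj : Set.InjOn (fun t : (ℤ × ℤ) × (ℤ × ℤ) × (ℤ × ℤ) => (t.1, t.2.1)) S := by
      intro t ht t' ht' h
      simp only [Prod.mk.injEq] at h
      have c1 := (hS t ht).2.2.2.1
      have c2 := (hS t' ht').2.2.2.1
      rw [h.1, c2, h.2] at c1
      exact Prod.ext h.1 (Prod.ext h.2 (add_left_cancel c1).symm)
    rw [← Finset.card_image_of_injOn hinj]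
    apply hC N N₂ hN hle n₁ (fun n => (n.1 - n₁.1) * n₁.1 + (n.2 - n₁.2) * n₁.2 - m / 2)
    intro s hs
    obtain ⟨t, ht, rfl⟩ := Finset.mem_image.1 hs
    have g := hS t ht
    obtain ⟨c1, c2⟩ := aux_phi _ _ _ _ _ _ g
    refine ⟨g.1, g.2.1, g.2.2.2.2.1, ?_⟩
    have e1 : t.2.1.1 = n₁.1 + t.2.2.1 - t.1.1 := by rw [c2]; rfl
    have e2 : t.2.1.2 = n₁.2 + t.2.2.2 - t.1.2 := by rw [c2]; rfl
    simp only
    rw [e1, e2]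
    linear_combination -c1
  · intro hle
    have hinj : Set.InjOn (fun t : (ℤ × ℤ) × (ℤ × ℤ) × (ℤ × ℤ) => (t.1, t.2.2)) S := by
      intro t ht t' ht' h
      simp only [Prod.mk.injEq] at h
      have c1 := (aux_phi _ _ _ _ _ _ (hS t ht)).2
      have c2 := (aux_phi _ _ _ _ _ _ (hS t' ht')).2
      refine Prod.ext h.1 (Prod.ext ?_ h.2)
      rw [c1, c2, h.1, h.2]
    rw [← Finset.card_image_of_injOn hinj]
    apply hC N N₃ hN hle n₁ (fun n => (n.1 - n₁.1) * n.1 + (n.2 - n₁.2) * n.2 - m / 2)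
    intro s hs
    obtain ⟨t, ht, rfl⟩ := Finset.mem_image.1 hs
    have g := hS t ht
    obtain ⟨c1, c2⟩ := aux_phi _ _ _ _ _ _ g
    refine ⟨g.1, g.2.2.1, g.2.2.2.2.1, ?_⟩
    simp only
    linear_combination -c1

theorem aux_count (ε : ℝ) (hε : 0 < ε) : ∃ K : ℝ, 1 ≤ K ∧ ∀ N N₂ N₃ : ℕ, 1 ≤ N → 1 ≤ N₂ → 1 ≤ N₃ →
    ∀ (n₁ : ℤ × ℤ) (m : ℤ) (S : Finset ((ℤ × ℤ) × (ℤ × ℤ) × (ℤ × ℤ))),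
    (∀ t ∈ S, auxGood N N₂ N₃ n₁ m t) →
    (S.card : ℝ) ≤ (K * min (min ((N₃ : ℝ) * (min (N : ℝ) N₂) ^ ε)
          (((N : ℝ) * N₂) ^ ((1 : ℝ) / 2 + ε)))
        (min (((N : ℝ) * N₃) ^ ((1 : ℝ) / 2 + ε)) (((N₂ : ℝ) * N₃) ^ ((1 : ℝ) / 2 + ε)))) ^ 2 := by
  obtain ⟨C1, hC1, h1⟩ := aux_L1 (2 * ε) (by positivity)
  obtain ⟨C2, hC2, h2⟩ := aux_L2 (2 * ε) (by positivity)
  have hK : 1 ≤ C1 + C2 := by linarith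
  refine ⟨C1 + C2, hK, ?_⟩
  have hsq : ∀ A : ℝ, 0 < A → (A ^ ((1 : ℝ) / 2 + ε)) ^ 2 = A ^ (1 + 2 * ε) := by
    intro A hA
    rw [← Real.rpow_natCast, ← Real.rpow_mul hA.le]
    congr 1
    push_cast; ring
  have hsq2 : ∀ A : ℝ, 0 < A → (A ^ ε) ^ 2 = A ^ (2 * ε) := by
    intro A hA
    rw [← Real.rpow_natCast, ← Real.rpow_mul hA.le]
    congr 1
    push_cast; ring
  have hup : ∀ c X : ℝ, c ≤ (C1 + C2) * X ^ 2 → c ≤ ((C1 + C2) * X) ^ 2 := by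
    intro c X h
    rw [mul_pow]
    refine h.trans ?_
    have : C1 + C2 ≤ (C1 + C2) ^ 2 := by nlinarith
    gcongr
  have key : ∀ N N₂ N₃ : ℕ, 1 ≤ N → 1 ≤ N₃ →
      ∀ (n₁ : ℤ × ℤ) (m : ℤ) (S : Finset ((ℤ × ℤ) × (ℤ × ℤ) × (ℤ × ℤ))),
      (∀ t ∈ S, auxGood N N₂ N₃ n₁ m t) →
      (S.card : ℝ) ≤ ((C1 + C2) * (((N : ℝ) * N₃) ^ ((1 : ℝ) / 2 + ε))) ^ 2 := by
    intro N N₂ N₃ hN hN3 n₁ m S hS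
    have hN' : (1 : ℝ) ≤ N := by exact_mod_cast hN
    have hN3' : (1 : ℝ) ≤ N₃ := by exact_mod_cast hN3
    apply hup
    rw [hsq _ (by positivity)]
    rcases le_total N N₃ with h | h
    · refine ((h2 N N₂ N₃ hN n₁ m S hS).2 h).trans ?_
      gcongr
      linarith
    · have h' : (N₃ : ℝ) ≤ N := by exact_mod_cast h
      refine (h1 N N₂ N₃ hN hN3 n₁ m S hS).trans ?_
      rw [Real.rpow_add (by positivity), Real.rpow_one]
      have e1 : (N₃ : ℝ) ^ 2 ≤ N * N₃ := by nlinarith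
      have e2 : (N : ℝ) ^ (2 * ε) ≤ ((N : ℝ) * N₃) ^ (2 * ε) := by
        gcongr
        nlinarith
      gcongr
      linarith
  have key2 : ∀ N N₂ N₃ : ℕ, 1 ≤ N → N ≤ N₂ →
      ∀ (n₁ : ℤ × ℤ) (m : ℤ) (S : Finset ((ℤ × ℤ) × (ℤ × ℤ) × (ℤ × ℤ))),
      (∀ t ∈ S, auxGood N N₂ N₃ n₁ m t) →
      (S.card : ℝ) ≤ ((C1 + C2) * (((N : ℝ) * N₂) ^ ((1 : ℝ) / 2 + ε))) ^ 2 := by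
    intro N N₂ N₃ hN hN2 n₁ m S hS
    have hN' : (1 : ℝ) ≤ N := by exact_mod_cast hN
    have hN2' : (1 : ℝ) ≤ N₂ := by exact_mod_cast hN.trans hN2
    apply hup
    rw [hsq _ (by positivity)]
    refine ((h2 N N₂ N₃ hN n₁ m S hS).1 hN2).trans ?_
    gcongr
    linarith
  have key1 : ∀ N N₂ N₃ : ℕ, 1 ≤ N → 1 ≤ N₃ →
      ∀ (n₁ : ℤ × ℤ) (m : ℤ) (S : Finset ((ℤ × ℤ) × (ℤ × ℤ) × (ℤ × ℤ))),
      (∀ t ∈ S, auxGood N N₂ N₃ n₁ m t) →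
      (S.card : ℝ) ≤ ((C1 + C2) * ((N₃ : ℝ) * (N : ℝ) ^ ε)) ^ 2 := by
    intro N N₂ N₃ hN hN3 n₁ m S hS
    have hN' : (1 : ℝ) ≤ N := by exact_mod_cast hN
    apply hup
    rw [mul_pow, hsq2 _ (by positivity)]
    refine (h1 N N₂ N₃ hN hN3 n₁ m S hS).trans ?_
    gcongr
    linarith
  intro N N₂ N₃ hN hN2 hN3 n₁ m S hS
  obtain ⟨S', hc', hS'⟩ := aux_swap_card N N₂ N₃ n₁ m S hS
  have b1 : (S.card : ℝ) ≤ ((C1 + C2) * ((N₃ : ℝ) * (min (N : ℝ) N₂) ^ ε)) ^ 2 := by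
    rcases min_choice (N : ℝ) N₂ with h | h <;> rw [h]
    · exact key1 N N₂ N₃ hN hN3 n₁ m S hS
    · rw [← hc']; exact key1 N₂ N N₃ hN2 hN3 n₁ m S' hS'
  have b2 : (S.card : ℝ) ≤ ((C1 + C2) * (((N : ℝ) * N₂) ^ ((1 : ℝ) / 2 + ε))) ^ 2 := by
    rcases le_total N N₂ with h | h
    · exact key2 N N₂ N₃ hN h n₁ m S hS
    · rw [← hc', mul_comm (N : ℝ)]; exact key2 N₂ N N₃ hN2 h n₁ m S' hS'
  have b3 := key N N₂ N₃ hN hN3 n₁ m S hS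
  have b4 : (S.card : ℝ) ≤ ((C1 + C2) * (((N₂ : ℝ) * N₃) ^ ((1 : ℝ) / 2 + ε))) ^ 2 := by
    rw [← hc']; exact key N₂ N N₃ hN2 hN3 n₁ m S' hS'
  have comb : ∀ (c x y : ℝ), c ≤ ((C1 + C2) * x) ^ 2 → c ≤ ((C1 + C2) * y) ^ 2 →
      c ≤ ((C1 + C2) * min x y) ^ 2 := by
    intro c x y hx hy
    rcases min_choice x y with h | h <;> rw [h] <;> assumption
  exact comb _ _ _ (comb _ _ _ b1 b2) (comb _ _ _ b3 b4)

theorem aux_sim (N : ℕ) (n : ℤ × ℤ) (h : simDyadic (N : ℝ) n) : n ∈ auxBox N := by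
  have h1 : znorm n ≤ N := by
    rcases h with ⟨h1, h2⟩ | ⟨_, _, h2⟩
    · rw [h1]; exact h2
    · exact h2
  have h2 : (n.1 : ℝ) ^ 2 + (n.2 : ℝ) ^ 2 ≤ (N : ℝ) ^ 2 :=
    (Real.sqrt_le_left (by positivity)).1 h1
  rw [mem_auxBox]
  constructor
  · have : |(n.1 : ℝ)| ≤ N := abs_le_of_sq_le_sq (by nlinarith [sq_nonneg (n.2 : ℝ)]) (by positivity)
    exact_mod_cast this
  · have : |(n.2 : ℝ)| ≤ N := abs_le_of_sq_le_sq (by nlinarith [sq_nonneg (n.1 : ℝ)]) (by positivity)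
    exact_mod_cast this

theorem aux_fiber_sum {α β : Type*} [DecidableEq β] (T : Finset α) (g : α → β) (f : β → ℝ)
    (hf : Summable (fun x => f x ^ 2)) (M : ℝ)
    (hM : ∀ x, ((T.filter (fun t => g t = x)).card : ℝ) ≤ M) :
    ∑ t ∈ T, f (g t) ^ 2 ≤ M * ∑' x, f x ^ 2 := by
  rcases T.eq_empty_or_nonempty with rfl | ⟨t0, _⟩
  · simp only [Finset.sum_empty]
    by_cases hβ : Nonempty β
    · obtain ⟨x⟩ := hβ
      have := hM x
      simp only [Finset.filter_empty, Finset.card_empty, Nat.cast_zero] at this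
      exact mul_nonneg this (tsum_nonneg (fun _ => sq_nonneg _))
    · rw [not_nonempty_iff] at hβ
      simp
  have hM0 : 0 ≤ M := le_trans (Nat.cast_nonneg _) (hM (g t0))
  rw [← Finset.sum_fiberwise_of_maps_to' (t := T.image g) (g := g)
    (fun i hi => Finset.mem_image_of_mem _ hi) (fun x => f x ^ 2)]
  calc _ ≤ ∑ x ∈ T.image g, M * f x ^ 2 := by
        apply Finset.sum_le_sum
        intro x _
        rw [Finset.sum_const, nsmul_eq_mul]
        exact mul_le_mul_of_nonneg_right (hM x) (sq_nonneg _)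
    _ = M * ∑ x ∈ T.image g, f x ^ 2 := by rw [Finset.mul_sum]
    _ ≤ _ := by
        gcongr
        exact hf.sum_le_tsum _ (fun _ _ => sq_nonneg _)

theorem stmt13 (ε : ℝ) (hε : 0 < ε) :
    ∃ C : ℝ, 0 < C ∧ ∀ N N₁ N₂ N₃ : ℝ,
      IsDyadic N → IsDyadic N₁ → IsDyadic N₂ → IsDyadic N₃ → ∀ m : ℤ,
      ∀ f : ℤ × ℤ → ℝ, Summable (fun x => f x ^ 2) →
        Real.sqrt (∑' t : (ℤ × ℤ) × (ℤ × ℤ) × (ℤ × ℤ),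
            (∑' n₁ : ℤ × ℤ, hten N N₁ N₂ N₃ m t.1 n₁ t.2.1 t.2.2 * f n₁) ^ 2) ≤
          C * min (min (N₃ * (min N N₂) ^ ε) ((N * N₂) ^ ((1 : ℝ) / 2 + ε)))
                  (min ((N * N₃) ^ ((1 : ℝ) / 2 + ε)) ((N₂ * N₃) ^ ((1 : ℝ) / 2 + ε))) *
            Real.sqrt (∑' x : ℤ × ℤ, f x ^ 2) := by
  classical
  obtain ⟨K, hK1, hK⟩ := aux_count ε hε
  refine ⟨K, by linarith, ?_⟩
  rintro N N₁ N₂ N₃ ⟨k, hk⟩ - ⟨k₂, hk₂⟩ ⟨k₃, hk₃⟩ m f hf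
  obtain ⟨A, hA1, rfl⟩ : ∃ A : ℕ, 1 ≤ A ∧ N = (A : ℝ) :=
    ⟨2 ^ k, Nat.one_le_two_pow, by rw [hk]; push_cast; rfl⟩
  obtain ⟨A₂, hA2, rfl⟩ : ∃ A : ℕ, 1 ≤ A ∧ N₂ = (A : ℝ) :=
    ⟨2 ^ k₂, Nat.one_le_two_pow, by rw [hk₂]; push_cast; rfl⟩
  obtain ⟨A₃, hA3, rfl⟩ : ∃ A : ℕ, 1 ≤ A ∧ N₃ = (A : ℝ) :=
    ⟨2 ^ k₃, Nat.one_le_two_pow, by rw [hk₃]; push_cast; rfl⟩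
  set X := min (min ((A₃ : ℝ) * (min (A : ℝ) A₂) ^ ε) (((A : ℝ) * A₂) ^ ((1 : ℝ) / 2 + ε)))
    (min (((A : ℝ) * A₃) ^ ((1 : ℝ) / 2 + ε)) (((A₂ : ℝ) * A₃) ^ ((1 : ℝ) / 2 + ε))) with hX
  have hX0 : 0 ≤ X := by
    rw [hX]
    refine le_min (le_min ?_ ?_) (le_min ?_ ?_) <;> positivity
  let g : (ℤ × ℤ) × (ℤ × ℤ) × (ℤ × ℤ) → ℤ × ℤ := fun t => t.1 + t.2.1 - t.2.2
  have hg : ∀ (t : (ℤ × ℤ) × (ℤ × ℤ) × (ℤ × ℤ)) (x : ℤ × ℤ),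
      SMem A N₁ A₂ A₃ m t.1 x t.2.1 t.2.2 → x = g t := by
    intro t x h
    simp only [g]
    rw [h.1]; abel
  have hinner : ∀ t : (ℤ × ℤ) × (ℤ × ℤ) × (ℤ × ℤ),
      (∑' n₁ : ℤ × ℤ, hten A N₁ A₂ A₃ m t.1 n₁ t.2.1 t.2.2 * f n₁) =
        hten A N₁ A₂ A₃ m t.1 (g t) t.2.1 t.2.2 * f (g t) := by
    intro t
    apply tsum_eq_single
    intro x hx
    have : ¬ SMem A N₁ A₂ A₃ m t.1 x t.2.1 t.2.2 := fun h => hx (hg t x h)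
    simp [hten, this]
  let T : Finset ((ℤ × ℤ) × (ℤ × ℤ) × (ℤ × ℤ)) :=
    (auxBox A ×ˢ auxBox A₂ ×ˢ auxBox A₃).filter
      (fun t => SMem A N₁ A₂ A₃ m t.1 (g t) t.2.1 t.2.2)
  have hT : ∀ t, t ∈ T ↔ SMem A N₁ A₂ A₃ m t.1 (g t) t.2.1 t.2.2 := by
    intro t
    simp only [T, Finset.mem_filter, Finset.mem_product]
    constructor
    · exact fun h => h.2
    · intro h
      obtain ⟨_, _, _, _, s, _, s2, s3⟩ := id h
      exact ⟨⟨aux_sim _ _ s, aux_sim _ _ s2, aux_sim _ _ s3⟩, h⟩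
  have houter : (∑' t : (ℤ × ℤ) × (ℤ × ℤ) × (ℤ × ℤ),
      (∑' n₁ : ℤ × ℤ, hten A N₁ A₂ A₃ m t.1 n₁ t.2.1 t.2.2 * f n₁) ^ 2) =
      ∑ t ∈ T, f (g t) ^ 2 := by
    simp only [hinner]
    rw [tsum_eq_sum (s := T)]
    · apply Finset.sum_congr rfl
      intro t ht
      have := (hT t).1 ht
      simp [hten, this]
    · intro t ht
      have : ¬ SMem A N₁ A₂ A₃ m t.1 (g t) t.2.1 t.2.2 := fun h => ht ((hT t).2 h)
      simp [hten, this]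
  have hmain : ∑ t ∈ T, f (g t) ^ 2 ≤ (K * X) ^ 2 * ∑' x, f x ^ 2 := by
    apply aux_fiber_sum T g f hf
    intro x
    apply hK A A₂ A₃ hA1 hA2 hA3 x m
    intro t ht
    obtain ⟨ht1, rfl⟩ := Finset.mem_filter.1 ht
    obtain ⟨a, b, c, d, s, _, s2, s3⟩ := (hT t).1 ht1
    exact ⟨aux_sim _ _ s, aux_sim _ _ s2, aux_sim _ _ s3, a, b, c, d⟩
  rw [houter]
  calc Real.sqrt (∑ t ∈ T, f (g t) ^ 2) ≤ Real.sqrt ((K * X) ^ 2 * ∑' x, f x ^ 2) :=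
        Real.sqrt_le_sqrt hmain
    _ = K * X * Real.sqrt (∑' x, f x ^ 2) := by
        rw [Real.sqrt_mul (sq_nonneg _), Real.sqrt_sq (mul_nonneg (by linarith) hX0)]
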